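/- Let n ≥ 2, let V be any type, Ψ a subset of V, and φ a binary predicate on ℕ∞ × V. Suppose α_1, …, α_n ∈ ℕ∞ satisfy α_i ∨ α_j = 1 for all 1 ≤ i ≠ j ≤ n. If for every i with α_i = 1 there exists v ∈ Ψ with φ(α_i, v), then for every i ∈ {1, …, n} there exists v ∈ Ψ such that α_i = 1 implies φ(α_i, v). (This is the instance IP_{F_n, Ψ} of independence of premisses, which follows from LLPO_n.) -/

import Mathlib

/-- `ℕ∞`: decreasing binary sequences `ℕ → {0,1}`. -/
def DecSeq (α : ℕ → ℕ) : Prop := (∀ i, α i ≤ 1) ∧ ∀ i j, i ≤ j → α j ≤ α i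

/-- The instance `IP_{F_n, Ψ}` of independence of premisses (a consequence of `LLPO_n`). -/
theorem ip_Fn_Psi (n : ℕ) (hn : 2 ≤ n) (V : Type*) (Ψ : Set V)
    (φ : (ℕ → ℕ) → V → Prop)
    (αs : Fin n → (ℕ → ℕ)) (hdec : ∀ i, DecSeq (αs i))
    (hjoin : ∀ i j, i ≠ j → ∀ k, max (αs i k) (αs j k) = 1)
    (h : ∀ i, αs i = (fun _ => 1) → ∃ v ∈ Ψ, φ (αs i) v) :
    ∀ i, ∃ v ∈ Ψ, (αs i = (fun _ => 1) → φ (αs i) v) := by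
  intro i
  by_cases hi : αs i = (fun _ => 1)
  · obtain ⟨v, hv, hφ⟩ := h i hi
    exact ⟨v, hv, fun _ => hφ⟩
  · obtain ⟨k, hk⟩ := Function.ne_iff.mp hi
    have : Nontrivial (Fin n) := Fin.nontrivial_iff_two_le.mpr hn
    obtain ⟨j, hj⟩ := exists_ne i
    have hj1 : αs j = (fun _ => 1) := by
      funext m
      have h1 := (hdec i).1 k
      have h2 := (hdec i).2 k (max k m) (le_max_left _ _)
      have h3 := hjoin i j hj.symm (max k m)
      have h4 := (hdec j).2 m (max k m) (le_max_right _ _)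
      have h5 := (hdec j).1 m
      have hk' : αs i k ≠ 1 := hk
      show αs j m = 1
      generalize αs i (max k m) = a at *
      generalize αs j (max k m) = b at *
      omega
    obtain ⟨v, hv, _⟩ := h j hj1
    exact ⟨v, hv, fun h' => absurd h' hi⟩
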